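/- Under the stated parameter setting, for every i ∈ [K] and every t ∈ [T], the iterates of A^i and B^i in smoothed OGD move slowly with constant M = 2: λ·‖w_t^i − w_{t+1}^i‖ ≤ 2D and λ·‖v_t^i − v_{t+1}^i‖ ≤ 2D. -/

import Mathlib

/-- The Gauss error function. -/
noncomputable def erf (x : ℝ) : ℝ :=
  (2 / Real.sqrt Real.pi) * ∫ s in (0:ℝ)..x, Real.exp (-s ^ 2)

/-- The unclipped confidence function of Discounted-Normal-Predictor. -/
noncomputable def gtilde (n Z x : ℝ) : ℝ :=
  Real.sqrt (n / 8) * Z * erf (x / Real.sqrt (8 * n)) * Real.exp (x ^ 2 / (16 * n))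

/-- The confidence function, the projection of the unclipped one onto `[0,1]`. -/
noncomputable def gconf (n Z x : ℝ) : ℝ := min (max (gtilde n Z x) 0) 1

/-- The window length of the i-th expert in smoothed OGD. -/
noncomputable def nfun (T i : ℕ) : ℝ := (T : ℝ) * (2 : ℝ) ^ ((1 : ℤ) - (i : ℤ))

/-- The step size of the i-th OGD expert in smoothed OGD. -/
noncomputable def etafun (T : ℕ) (D G lam : ℝ) (i : ℕ) : ℝ :=
  (D / G) * Real.sqrt (1 / ((1 + 2 * lam) * nfun T i))

section

open Set Real

/-!
An expert with step size `η` moves by at most `2ηG`, and the windows are long enough to turn this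
into `λ ‖w_t - w_{t+1}‖ ≤ D / 4`. A combiner moves no more than the faster of its two inputs, plus
`D` times the drift of its DNP-cu confidence. This confidence is `g̃` evaluated at the deviation
clamped to `[0, U(n)]`. The differential equation
`g̃'(x) = x / (8n) g̃(x) + Z / (4√π) exp (-x² / (16n))` makes `g̃` Lipschitz on that interval, and
`U(n)² ≤ 16 n log (1 / Z)` makes both the Lipschitz constant and the drift of the clamped deviation
small.

The resulting increments, summed over the levels, form a geometric series (the windows halve) of sum
at most `D` and `K` copies of `√λ Z D / 2`, of sum at most `D / 2`. The bits of level `i + 1` are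
bounded because level `i` moves slowly, so everything goes by induction on the level.
-/

/-! ### The confidence function -/

lemma hasDerivAt_erf (x : ℝ) : HasDerivAt erf (2 / √π * exp (-x ^ 2)) x := by
  have hcont : Continuous fun s : ℝ => exp (-s ^ 2) := by fun_prop
  exact (hcont.integral_hasStrictDerivAt 0 x).hasDerivAt.const_mul _

lemma monotone_erf : Monotone erf :=
  monotone_of_hasDerivAt_nonneg hasDerivAt_erf fun _ => by positivity

lemma erf_zero : erf 0 = 0 := by simp [erf]

lemma mul_erf_nonneg (x : ℝ) : 0 ≤ x * erf x := by
  rcases le_total 0 x with hx | hx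
  · exact mul_nonneg hx (erf_zero ▸ monotone_erf hx)
  · exact mul_nonneg_of_nonpos_of_nonpos hx (erf_zero ▸ monotone_erf hx)

lemma two_thirds_le_erf_one : 2 / 3 ≤ erf 1 := by
  have hint : (2 / 3 : ℝ) ≤ ∫ s in (0 : ℝ)..1, exp (-s ^ 2) :=
    calc (2 / 3 : ℝ) = ∫ s in (0 : ℝ)..1, (1 - s ^ 2) := by
          rw [intervalIntegral.integral_sub (by simp)
            (Continuous.intervalIntegrable (by fun_prop) _ _)]
          norm_num [integral_pow]
      _ ≤ ∫ s in (0 : ℝ)..1, exp (-s ^ 2) :=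
          intervalIntegral.integral_mono_on zero_le_one
            (Continuous.intervalIntegrable (by fun_prop) _ _)
            (Continuous.intervalIntegrable (by fun_prop) _ _)
            fun s _ => one_sub_le_exp_neg (s ^ 2)
  have hpi : √π ≤ 2 := by
    rw [sqrt_le_left zero_le_two]
    linarith [pi_lt_four]
  have hfactor : 1 ≤ 2 / √π := by rwa [one_le_div (by positivity)]
  exact hint.trans (le_mul_of_one_le_left (by linarith) hfactor)

variable {n Z U : ℝ}

lemma gtilde_zero (n Z : ℝ) : gtilde n Z 0 = 0 := by simp [gtilde, erf_zero]

lemma hasDerivAt_gtilde (hn : 0 < n) (Z x : ℝ) :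
    HasDerivAt (gtilde n Z)
      (x / (8 * n) * gtilde n Z x + Z / (4 * √π) * exp (-x ^ 2 / (16 * n))) x := by
  have herf : HasDerivAt (fun y => erf (y / √(8 * n)))
      (2 / √π * exp (-(x / √(8 * n)) ^ 2) * (1 / √(8 * n))) x :=
    (hasDerivAt_erf _).comp x ((hasDerivAt_id x).div_const _)
  have hgauss : HasDerivAt (fun y => exp (y ^ 2 / (16 * n)))
      (exp (x ^ 2 / (16 * n)) * (2 * x / (16 * n))) x := by
    simpa using ((hasDerivAt_pow 2 x).div_const (16 * n)).exp
  have hsqrt : √(n / 8) = √(8 * n) / 8 := by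
    rw [show n / 8 = 8 * n / 8 ^ 2 by ring, sqrt_div (by positivity), sqrt_sq (by norm_num)]
  have hexp : exp (-(x / √(8 * n)) ^ 2) * exp (x ^ 2 / (16 * n)) = exp (-x ^ 2 / (16 * n)) := by
    rw [← exp_add, div_pow, sq_sqrt (by positivity)]
    congr 1
    field_simp
    ring
  refine ((herf.const_mul (√(n / 8) * Z)).mul hgauss).congr_deriv ?_
  rw [← hexp, gtilde, hsqrt]
  field_simp
  ring

lemma mul_gtilde_nonneg (hn : 0 < n) (hZ : 0 ≤ Z) (x : ℝ) : 0 ≤ x * gtilde n Z x := by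
  have herf := mul_erf_nonneg (x / √(8 * n))
  calc 0 ≤ √(8 * n) * √(n / 8) * Z * (x / √(8 * n) * erf (x / √(8 * n)))
          * exp (x ^ 2 / (16 * n)) := by positivity
    _ = x * gtilde n Z x := by
        rw [gtilde]
        field_simp

lemma monotone_gtilde (hn : 0 < n) (hZ : 0 ≤ Z) : Monotone (gtilde n Z) := by
  refine monotone_of_hasDerivAt_nonneg (hasDerivAt_gtilde hn Z) fun x => ?_
  have hgrowth : 0 ≤ x / (8 * n) * gtilde n Z x := by
    rw [div_mul_eq_mul_div]
    exact div_nonneg (mul_gtilde_nonneg hn hZ x) (by positivity)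
  exact add_nonneg hgrowth (by positivity)

lemma abs_gtilde_sub_le (hn : 0 < n) (hZ : 0 ≤ Z) (hgU : gtilde n Z U ≤ 1) {x y : ℝ}
    (hx : x ∈ Icc 0 U) (hy : y ∈ Icc 0 U) :
    |gtilde n Z y - gtilde n Z x| ≤ (U / (8 * n) + Z / 4) * |y - x| := by
  refine (convex_Icc 0 U).norm_image_sub_le_of_norm_hasDerivWithin_le
    (fun z _ => (hasDerivAt_gtilde hn Z z).hasDerivWithinAt) ?_ hx hy
  rintro z ⟨hz0, hzU⟩
  have hg0 : 0 ≤ gtilde n Z z := gtilde_zero n Z ▸ monotone_gtilde hn hZ hz0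
  have hg1 : gtilde n Z z ≤ 1 := (monotone_gtilde hn hZ hzU).trans hgU
  have hU : 0 ≤ U := hz0.trans hzU
  have hgrowth : z / (8 * n) * gtilde n Z z ≤ U / (8 * n) :=
    calc z / (8 * n) * gtilde n Z z ≤ U / (8 * n) * 1 := by gcongr
      _ = U / (8 * n) := mul_one _
  have hgauss : Z / (4 * √π) * exp (-z ^ 2 / (16 * n)) ≤ Z / 4 := by
    have hpi : 1 ≤ √π := one_le_sqrt.2 (by linarith [pi_gt_three])
    have hexp : exp (-z ^ 2 / (16 * n)) ≤ 1 :=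
      exp_le_one_iff.2 (div_nonpos_of_nonpos_of_nonneg (by nlinarith) (by positivity))
    calc Z / (4 * √π) * exp (-z ^ 2 / (16 * n)) ≤ Z / (4 * 1) * 1 := by gcongr
      _ = Z / 4 := by ring
  rw [norm_of_nonneg (by positivity)]
  exact add_le_add hgrowth hgauss

lemma gconf_mem_Icc (n Z x : ℝ) : gconf n Z x ∈ Icc 0 1 :=
  ⟨le_min (le_max_right _ _) zero_le_one, min_le_right _ _⟩

lemma gconf_eq_gtilde_projIcc (hn : 0 < n) (hZ : 0 ≤ Z) (hU : 0 ≤ U) (hgU : gtilde n Z U = 1)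
    (x : ℝ) : gconf n Z x = gtilde n Z (projIcc 0 U hU x) := by
  have hmono := monotone_gtilde hn hZ
  rw [coe_projIcc, hmono.map_max, hmono.map_min, gtilde_zero, hgU, max_min_distrib_left,
    max_eq_right zero_le_one, min_comm, max_comm, gconf]

lemma one_lt_gtilde_sqrt (hn : 32 ≤ n) (hZ : 0 < Z) (hL : 1 ≤ log (1 / Z)) :
    1 < gtilde n Z √(16 * n * log (1 / Z)) := by
  have hexp : Z * exp (log (1 / Z)) = 1 := by
    rw [exp_log (by positivity), mul_one_div_cancel hZ.ne']
  generalize log (1 / Z) = L at *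
  have hroot : 2 ≤ √(n / 8) := le_sqrt_of_sq_le (by linarith)
  have harg : 1 ≤ √(16 * n * L) / √(8 * n) := by
    rw [one_le_div (by positivity)]
    exact sqrt_le_sqrt (by nlinarith)
  have herf := two_thirds_le_erf_one.trans (monotone_erf harg)
  calc (1 : ℝ) < 2 * (2 / 3) := by norm_num
    _ ≤ √(n / 8) * erf (√(16 * n * L) / √(8 * n)) := by gcongr
    _ = √(n / 8) * erf (√(16 * n * L) / √(8 * n)) * (Z * exp L) := by rw [hexp, mul_one]
    _ = gtilde n Z √(16 * n * L) := by
        rw [gtilde, sq_sqrt (by positivity), mul_div_cancel_left₀ L (by positivity)]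
        ring

lemma sq_le_of_gtilde_le_one (hn : 32 ≤ n) (hZ : 0 < Z) (hL : 1 ≤ log (1 / Z)) (hU : 0 ≤ U)
    (hgU : gtilde n Z U ≤ 1) : U ^ 2 ≤ 16 * n * log (1 / Z) := by
  have hlt : U < √(16 * n * log (1 / Z)) :=
    (monotone_gtilde (by linarith) hZ.le).reflect_lt
      (hgU.trans_lt (one_lt_gtilde_sqrt hn hZ hL))
  exact (le_sqrt hU (by positivity)).1 hlt.le

/-! ### One step of the Discounted-Normal-Predictor -/

/-- The update of the deviation of DNP-cu with window `n` and threshold `U` upon reading bit `b`. -/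
noncomputable def dnpUpdate (n U x b : ℝ) : ℝ :=
  if (0 ≤ x ∧ x ≤ U) ∨ (x < 0 ∧ 0 < b) ∨ (U < x ∧ b < 0)
  then (1 - 1 / n) * x + b else (1 - 1 / n) * x

lemma abs_projIcc_dnpUpdate_sub_le (hn : 1 ≤ n) (hU : 0 ≤ U) (x b : ℝ) :
    |(projIcc 0 U hU (dnpUpdate n U x b) : ℝ) - projIcc 0 U hU x| ≤ U / n + |b| := by
  have hn1 : 1 / n ≤ 1 := (div_le_one (by linarith)).2 hn
  have hdecay : 0 ≤ U / n := by positivity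
  obtain ⟨hb_neg, hb_pos⟩ := abs_le.1 (le_refl |b|)
  rcases lt_or_ge x 0 with hx | hx
  · rw [projIcc_of_le_left hU hx.le, sub_zero, abs_of_nonneg (projIcc 0 U hU _).2.1, coe_projIcc]
    have hx_shrunk : (1 - 1 / n) * x ≤ 0 :=
      mul_nonpos_of_nonneg_of_nonpos (by linarith) hx.le
    refine max_le (by positivity) (min_le_of_right_le ?_)
    rw [dnpUpdate]
    split_ifs <;> linarith [abs_nonneg b]
  rcases le_or_gt x U with hxU | hxU
  · refine (abs_projIcc_sub_projIcc hU).trans ?_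
    rw [dnpUpdate, if_pos (Or.inl ⟨hx, hxU⟩)]
    calc |(1 - 1 / n) * x + b - x| = |-(x / n) + b| := by ring_nf
      _ ≤ |-(x / n)| + |b| := abs_add_le _ _
      _ = x / n + |b| := by rw [abs_neg, abs_of_nonneg (by positivity)]
      _ ≤ U / n + |b| := by gcongr
  · have hx_shrunk : U - U / n ≤ (1 - 1 / n) * x := by
      calc U - U / n = (1 - 1 / n) * U := by ring
        _ ≤ (1 - 1 / n) * x := mul_le_mul_of_nonneg_left hxU.le (by linarith)
    have hupdate : U - U / n - |b| ≤ dnpUpdate n U x b := by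
      rw [dnpUpdate]
      split_ifs <;> linarith
    rw [projIcc_of_right_le hU hxU.le, abs_sub_comm,
      abs_of_nonneg (sub_nonneg.2 (projIcc 0 U hU _).2.2), coe_projIcc, sub_le_comm]
    exact le_max_of_le_right (le_min (by linarith [abs_nonneg b]) (by linarith))

/-- Square root of the ratio between `32 max(λ, 1) log (1 / Z)`, a lower bound for the windows
of smoothed OGD, and the window `n`. It controls the drift of the DNP-cu confidence, and it grows
geometrically as the windows are halved. -/
noncomputable def windowRatio (lam Z n : ℝ) : ℝ := √(32 * max lam 1 * log (1 / Z) / n)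

lemma windowRatio_nonneg (lam Z n : ℝ) : 0 ≤ windowRatio lam Z n := sqrt_nonneg _

variable {lam : ℝ}

lemma windowRatio_le_one (hL : 0 ≤ log (1 / Z)) (hn : 32 * max lam 1 * log (1 / Z) ≤ n) :
    windowRatio lam Z n ≤ 1 := by
  rw [windowRatio, sqrt_le_one]
  exact div_le_one_of_le₀ hn (le_trans (by positivity) hn)

lemma div_mul_sqrt_le_windowRatio (hn : 0 < n) (hL : 0 ≤ log (1 / Z))
    (hU : U ^ 2 ≤ 16 * n * log (1 / Z)) : U / n * √(max lam 1) ≤ windowRatio lam Z n := by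
  have hm : 0 < max lam 1 := by positivity
  refine le_sqrt_of_sq_le ?_
  calc (U / n * √(max lam 1)) ^ 2 = U ^ 2 / n ^ 2 * max lam 1 := by
        rw [mul_pow, div_pow, sq_sqrt hm.le]
    _ ≤ 32 * n * log (1 / Z) / n ^ 2 * max lam 1 := by
        gcongr
        exact hU.trans (by gcongr; norm_num)
    _ = 32 * max lam 1 * log (1 / Z) / n := by field_simp

lemma mul_abs_gconf_dnpUpdate_sub_le (hlam : 0 ≤ lam) (hZ : 0 < Z) (hL : 1 ≤ log (1 / Z))
    (hn : 32 * max lam 1 * log (1 / Z) ≤ n) (hU : 0 ≤ U) (hgU : gtilde n Z U = 1) (x : ℝ) {b : ℝ}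
    (hb : |b| ≤ 1 / √(max lam 1)) :
    lam * |gconf n Z (dnpUpdate n U x b) - gconf n Z x|
      ≤ 1 / 4 * windowRatio lam Z n + 1 / 2 * (√lam * Z) := by
  have hm : 1 ≤ max lam 1 := le_max_right _ _
  have hn32 : 32 ≤ n := by nlinarith
  have hn0 : 0 < n := by linarith
  have hlam_q : √lam ≤ √(max lam 1) := sqrt_le_sqrt (le_max_left _ _)
  have hq : 0 < √(max lam 1) := by positivity
  have hdrift := div_mul_sqrt_le_windowRatio (lam := lam) hn0 (zero_le_one.trans hL)
    (sq_le_of_gtilde_le_one hn32 hZ hL hU hgU.le)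
  have hdrift_one := hdrift.trans (windowRatio_le_one (zero_le_one.trans hL) hn)
  have hfirst : lam / √(max lam 1) ^ 2 ≤ 1 := by
    rw [sq_sqrt (by positivity)]
    exact div_le_one_of_le₀ (le_max_left _ _) (by positivity)
  have hsecond : lam / √(max lam 1) ≤ √lam := by
    rw [div_le_iff₀ hq]
    calc lam = √lam * √lam := (mul_self_sqrt hlam).symm
      _ ≤ √lam * √(max lam 1) := by gcongr
  have hlip : |gconf n Z (dnpUpdate n U x b) - gconf n Z x|
      ≤ (U / (8 * n) + Z / 4) * (U / n + 1 / √(max lam 1)) := by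
    rw [gconf_eq_gtilde_projIcc hn0 hZ.le hU hgU, gconf_eq_gtilde_projIcc hn0 hZ.le hU hgU]
    refine (abs_gtilde_sub_le hn0 hZ.le hgU.le (projIcc 0 U hU _).2 (projIcc 0 U hU _).2).trans ?_
    gcongr
    exact (abs_projIcc_dnpUpdate_sub_le (by linarith) hU x b).trans (by gcongr)
  have hratio := windowRatio_nonneg lam Z n
  generalize √(max lam 1) = q at *
  calc lam * |gconf n Z (dnpUpdate n U x b) - gconf n Z x|
      ≤ lam * ((U / (8 * n) + Z / 4) * (U / n + 1 / q)) := by gcongr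
    _ = (1 / 8 * (lam / q ^ 2) * (U / n * q) + 1 / 4 * (lam / q) * Z) * (U / n * q + 1) := by
        field_simp
    _ ≤ (1 / 8 * 1 * windowRatio lam Z n + 1 / 4 * √lam * Z) * (1 + 1) := by gcongr
    _ = 1 / 4 * windowRatio lam Z n + 1 / 2 * (√lam * Z) := by ring

/-! ### Admissible parameters -/

/-- The conditions on the switching cost `λ`, the scale `Z`, the horizon `T` and the number `K` of
levels under which smoothed OGD moves slowly. -/
structure IsAdmissible (lam Z : ℝ) (T K : ℕ) : Prop where
  lam_nonneg : 0 ≤ lam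
  scale_pos : 0 < Z
  one_le_log : 1 ≤ log (1 / Z)
  le_last_window : 32 * max lam 1 * log (1 / Z) ≤ nfun T K
  levels_le : √lam * Z * K ≤ 1

lemma nfun_antitone (T : ℕ) : Antitone (nfun T) := fun i j hij => by
  unfold nfun
  gcongr
  · exact one_le_two

lemma nfun_eq_two_mul_nfun_succ (T i : ℕ) : nfun T i = 2 * nfun T (i + 1) := by
  rw [nfun, nfun, show (1 : ℤ) - i = 1 - (i + 1 : ℕ) + 1 by push_cast; ring,
    zpow_add_one₀ two_ne_zero]
  ring

lemma le_nfun_of_eq_floor_logb {T K : ℕ} {c : ℝ} (hT : 0 < T) (hc : 0 < c)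
    (hK : (K : ℤ) = ⌊logb 2 (T / c)⌋ + 1) : c ≤ nfun T K := by
  have hpow : (2 : ℝ) ^ ((K : ℤ) - 1) ≤ T / c := by
    rw [hK, add_sub_cancel_right, ← rpow_intCast, ← le_logb_iff_rpow_le one_lt_two (by positivity)]
    exact Int.floor_le _
  rw [nfun, ← neg_sub (K : ℤ), zpow_neg, ← div_eq_mul_inv, le_div_comm₀ hc (by positivity)]
  exact hpow

lemma le_logb_of_two_le_nfun {T K : ℕ} (hn : 2 ≤ nfun T K) : (K : ℝ) ≤ logb 2 T := by
  have hwindow : nfun T K = 2 * T / 2 ^ K := by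
    rw [nfun, zpow_sub₀ two_ne_zero, zpow_one, zpow_natCast]
    ring
  rw [hwindow, le_div_iff₀ (by positivity)] at hn
  have hpow : (2 : ℝ) ^ K ≤ T := by linarith
  rw [le_logb_iff_rpow_le one_lt_two (lt_of_lt_of_le (by positivity) hpow), rpow_natCast]
  exact hpow

lemma isAdmissible_of_eq_floor_logb {T K : ℕ} (hlam : 0 ≤ lam) (hZ : Z = 1 / (T : ℝ))
    (hT : max (√lam * logb 2 T) (exp 1) ≤ T)
    (hK : (K : ℤ) = ⌊logb 2 (T / (32 * max lam 1 * log (1 / Z)))⌋ + 1) :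
    IsAdmissible lam Z T K := by
  obtain ⟨hT_lam, hT_exp⟩ := max_le_iff.1 hT
  have hT0 : (0 : ℝ) < T := (exp_pos 1).trans_le hT_exp
  have hlog : 1 ≤ log (1 / Z) := by rwa [hZ, one_div_one_div, le_log_iff_exp_le hT0]
  have hm : 1 ≤ max lam 1 := le_max_right _ _
  have hwindow := le_nfun_of_eq_floor_logb (Nat.cast_pos.1 hT0) (by positivity) hK
  refine ⟨hlam, by rw [hZ]; positivity, hlog, hwindow, ?_⟩
  have hK_log : (K : ℝ) ≤ logb 2 T := le_logb_of_two_le_nfun (by nlinarith)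
  calc √lam * Z * K = √lam * K / T := by rw [hZ]; ring
    _ ≤ √lam * logb 2 T / T := by gcongr
    _ ≤ 1 := div_le_one_of_le₀ hT_lam hT0.le

/-- The bound, in units of the diameter, on `λ` times the movement of the combiner at level `i`. The
level-`i` expert contributes `1 / 4`, and the other two terms accumulate the drifts of the DNP-cu
confidences up to level `i`. -/
noncomputable def combinerBound (lam Z : ℝ) (T i : ℕ) : ℝ :=
  1 / 4 + windowRatio lam Z (nfun T i) + 1 / 2 * (√lam * Z * i)

namespace IsAdmissible

variable {T K i : ℕ}

lemma le_window (h : IsAdmissible lam Z T K) (hiK : i ≤ K) :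
    32 * max lam 1 * log (1 / Z) ≤ nfun T i :=
  h.le_last_window.trans (nfun_antitone T hiK)

lemma mul_lam_le_window (h : IsAdmissible lam Z T K) (hiK : i ≤ K) : 32 * lam ≤ nfun T i :=
  calc 32 * lam = 32 * lam * 1 := (mul_one _).symm
    _ ≤ 32 * max lam 1 * log (1 / Z) := by
        gcongr
        · exact le_max_left _ _
        · exact h.one_le_log
    _ ≤ nfun T i := h.le_window hiK

lemma one_fourth_le_combinerBound (h : IsAdmissible lam Z T K) (i : ℕ) :
    1 / 4 ≤ combinerBound lam Z T i := by
  have hratio := windowRatio_nonneg lam Z (nfun T i)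
  have hscale := h.scale_pos
  rw [combinerBound, add_assoc]
  exact le_add_of_nonneg_right (by positivity)

lemma combinerBound_le_two (h : IsAdmissible lam Z T K) (hiK : i ≤ K) :
    combinerBound lam Z T i ≤ 2 := by
  have hratio := windowRatio_le_one (zero_le_one.trans h.one_le_log) (h.le_window hiK)
  have hlevels : √lam * Z * i ≤ 1 := by
    have hscale := h.scale_pos
    exact le_trans (by gcongr) h.levels_le
  rw [combinerBound]
  linarith

end IsAdmissible

/-- The exact factor is `1 / √2`; with `3 / 4` the induction absorbs a drift of a quarter of the
next ratio. -/
lemma windowRatio_nfun_le (lam Z : ℝ) (T i : ℕ) :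
    windowRatio lam Z (nfun T i) ≤ 3 / 4 * windowRatio lam Z (nfun T (i + 1)) := by
  set r := 32 * max lam 1 * log (1 / Z) / nfun T (i + 1) with hr
  have hhalf : 32 * max lam 1 * log (1 / Z) / nfun T i = 1 / 2 * r := by
    rw [hr, nfun_eq_two_mul_nfun_succ]
    ring
  have hsqrt_half : √(1 / 2) ≤ 3 / 4 := by
    rw [sqrt_le_left (by norm_num)]
    norm_num
  rw [windowRatio, windowRatio, hhalf, sqrt_mul (by norm_num)]
  gcongr

lemma combinerBound_add_drift_le (lam Z : ℝ) (T i : ℕ) :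
    combinerBound lam Z T i
        + (1 / 4 * windowRatio lam Z (nfun T (i + 1)) + 1 / 2 * (√lam * Z))
      ≤ combinerBound lam Z T (i + 1) := by
  have hratio := windowRatio_nfun_le lam Z T i
  simp only [combinerBound, Nat.cast_add_one]
  linarith

/-! ### Smoothed OGD -/

lemma mul_etafun_mul_le {D G : ℝ} {T i : ℕ} (hD : 0 ≤ D) (hG : G ≠ 0) (hlam : 0 ≤ lam)
    (hn : 32 * lam ≤ nfun T i) : lam * (etafun T D G lam i * G) ≤ 1 / 8 * D := by
  have hn0 : 0 ≤ nfun T i := le_trans (by positivity) hn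
  have hsqrt : lam * √(1 / ((1 + 2 * lam) * nfun T i)) ≤ 1 / 8 := by
    refine le_of_sq_le_sq ?_ (by norm_num)
    rw [mul_pow, sq_sqrt (by positivity), mul_one_div]
    refine div_le_of_le_mul₀ (by positivity) (by positivity) ?_
    nlinarith
  calc lam * (etafun T D G lam i * G)
      = lam * √(1 / ((1 + 2 * lam) * nfun T i)) * D := by
        rw [etafun]
        field_simp
    _ ≤ 1 / 8 * D := by gcongr

lemma norm_sub_le_two_mul_norm_of_nearest {E : Type*} [SeminormedAddCommGroup E] {W : Set E}
    {p s q : E} (hp : p ∈ W) (hq : ∀ y ∈ W, ‖p - s - q‖ ≤ ‖p - s - y‖) :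
    ‖p - q‖ ≤ 2 * ‖s‖ :=
  calc ‖p - q‖ = ‖p - s - q + s‖ := by congr 1; abel
    _ ≤ ‖p - s - q‖ + ‖s‖ := norm_add_le _ _
    _ ≤ ‖p - s - p‖ + ‖s‖ := by gcongr; exact hq p hp
    _ = 2 * ‖s‖ := by rw [sub_sub_cancel_left, norm_neg, two_mul]

section NormedSpace

variable {E : Type*} [SeminormedAddCommGroup E] [NormedSpace ℝ E]

lemma norm_convexComb_sub_le {c : ℝ} (hc : c ∈ Icc 0 1) (c' : ℝ) (p q p' q' : E) :
    ‖((1 - c) • p + c • q) - ((1 - c') • p' + c' • q')‖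
      ≤ max ‖p - p'‖ ‖q - q'‖ + |c' - c| * ‖p' - q'‖ := by
  have hc0 := hc.1
  have hc1 : 0 ≤ 1 - c := sub_nonneg.2 hc.2
  calc ‖((1 - c) • p + c • q) - ((1 - c') • p' + c' • q')‖
      = ‖(1 - c) • (p - p') + c • (q - q') + (c' - c) • (p' - q')‖ := by congr 1; module
    _ ≤ ‖(1 - c) • (p - p')‖ + ‖c • (q - q')‖ + ‖(c' - c) • (p' - q')‖ := norm_add₃_le
    _ = (1 - c) * ‖p - p'‖ + c * ‖q - q'‖ + |c' - c| * ‖p' - q'‖ := by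
        simp only [norm_smul, norm_of_nonneg hc0, norm_of_nonneg hc1, norm_eq_abs]
    _ ≤ (1 - c) * max ‖p - p'‖ ‖q - q'‖ + c * max ‖p - p'‖ ‖q - q'‖ + |c' - c| * ‖p' - q'‖ := by
        gcongr
        · exact le_max_left _ _
        · exact le_max_right _ _
    _ = max ‖p - p'‖ ‖q - q'‖ + |c' - c| * ‖p' - q'‖ := by ring

/-- A run of smoothed OGD with `K` levels, movement constant `M = 2` and scale `Z`. At level `i` the
expert `A^i` plays `w i t`, the combiner `B^i` plays `v i t`, and DNP-cu has threshold
`U i = U(n^(i))`, reads the bits `b i t` and has deviation `x i t`. The vector `g t p` is the update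
direction of round `t` at `p`, namely `∇f_t(p)` in the paper. Nearest points of `W` stand for the
projections onto `W`. -/
structure IsSmoothedOGD (W : Set E) (G D lam Z : ℝ) (T K : ℕ) (f : ℕ → E → ℝ) (g : ℕ → E → E)
    (U : ℕ → ℝ) (w v : ℕ → ℕ → E) (b x : ℕ → ℕ → ℝ) : Prop where
  threshold : ∀ i, 1 ≤ i → i ≤ K → 0 < U i ∧ gtilde (nfun T i) Z (U i) = 1
  expert_one : ∀ i, 1 ≤ i → i ≤ K → w i 1 ∈ W
  expert_succ : ∀ i, 1 ≤ i → i ≤ K → ∀ t, 1 ≤ t → t ≤ T → w i (t + 1) ∈ W ∧ ∀ y ∈ W,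
    ‖w i t - etafun T D G lam i • g t (w i t) - w i (t + 1)‖
      ≤ ‖w i t - etafun T D G lam i • g t (w i t) - y‖
  bit : ∀ i t, b i t =
    (((f t (v (i - 1) t) + lam * G * ‖v (i - 1) t - v (i - 1) (t + 1)‖)
        - (f t (w i t) + lam * G * ‖w i t - w i (t + 1)‖)) / ((1 + 2) * G * D))
      / max √lam 1
  deviation_one : ∀ i, 2 ≤ i → i ≤ K → x i 1 = 0
  deviation_succ : ∀ i, 2 ≤ i → i ≤ K → ∀ t, 1 ≤ t → t ≤ T →
    x i (t + 1) = dnpUpdate (nfun T i) (U i) (x i t) (b i t)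
  combiner_one : ∀ t, v 1 t = w 1 t
  combiner : ∀ i, 2 ≤ i → i ≤ K → ∀ t, 1 ≤ t → t ≤ T + 1 →
    v i t = (1 - gconf (nfun T i) Z (x i t)) • v (i - 1) t + gconf (nfun T i) Z (x i t) • w i t

lemma abs_lossGap_div_le_one {C y z p q : ℝ} (hy : y ∈ Icc 0 C) (hz : z ∈ Icc 0 C)
    (hp : p ∈ Icc 0 (2 * C)) (hq : q ∈ Icc 0 (2 * C)) :
    |((y + p) - (z + q)) / (3 * C)| ≤ 1 := by
  have hC : 0 ≤ 3 * C := mul_nonneg zero_le_three (hy.1.trans hy.2)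
  rw [abs_div, abs_of_nonneg hC]
  refine div_le_one_of_le₀ (abs_le.2 ⟨?_, ?_⟩) hC
  · linarith [hy.1, hz.2, hp.1, hq.2]
  · linarith [hy.2, hz.1, hp.2, hq.1]

namespace IsSmoothedOGD

variable {W : Set E} {G D : ℝ} {T K : ℕ} {f : ℕ → E → ℝ} {g : ℕ → E → E} {U : ℕ → ℝ}
  {w v : ℕ → ℕ → E} {b x : ℕ → ℕ → ℝ} {i t : ℕ}

lemma expert_mem (h : IsSmoothedOGD W G D lam Z T K f g U w v b x) (hi : 1 ≤ i) (hiK : i ≤ K)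
    (ht : 1 ≤ t) (htT : t ≤ T + 1) : w i t ∈ W := by
  cases t, ht using Nat.le_induction with
  | base => exact h.expert_one i hi hiK
  | succ t ht => exact (h.expert_succ i hi hiK t ht (by lia)).1

lemma combiner_succ (h : IsSmoothedOGD W G D lam Z T K f g U w v b x) (hi : 1 ≤ i)
    (hiK : i + 1 ≤ K) (ht : 1 ≤ t) (htT : t ≤ T + 1) :
    v (i + 1) t = (1 - gconf (nfun T (i + 1)) Z (x (i + 1) t)) • v i t
      + gconf (nfun T (i + 1)) Z (x (i + 1) t) • w (i + 1) t :=
  h.combiner (i + 1) (by lia) hiK t ht htT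

lemma combiner_mem (h : IsSmoothedOGD W G D lam Z T K f g U w v b x) (hW : Convex ℝ W)
    (hi : 1 ≤ i) (hiK : i ≤ K) (ht : 1 ≤ t) (htT : t ≤ T + 1) : v i t ∈ W := by
  induction i, hi using Nat.le_induction with
  | base => exact h.combiner_one t ▸ h.expert_mem le_rfl hiK ht htT
  | succ i hi ih =>
    obtain ⟨hc0, hc1⟩ := gconf_mem_Icc (nfun T (i + 1)) Z (x (i + 1) t)
    rw [h.combiner_succ hi hiK ht htT]
    exact hW (ih (by lia)) (h.expert_mem (by lia) hiK ht htT) (sub_nonneg.2 hc1) hc0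
      (sub_add_cancel 1 _)

lemma expert_movement_le (h : IsSmoothedOGD W G D lam Z T K f g U w v b x)
    (hpar : IsAdmissible lam Z T K) (hG : 0 < G) (hD : 0 ≤ D)
    (hg : ∀ t, 1 ≤ t → t ≤ T → ∀ p ∈ W, ‖g t p‖ ≤ G) (hi : 1 ≤ i) (hiK : i ≤ K)
    (ht : 1 ≤ t) (htT : t ≤ T) : lam * ‖w i t - w i (t + 1)‖ ≤ 1 / 4 * D := by
  have hlam := hpar.lam_nonneg
  have hw := h.expert_mem hi hiK ht (by lia)
  have heta : 0 ≤ etafun T D G lam i := by rw [etafun]; positivity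
  have hstep : ‖etafun T D G lam i • g t (w i t)‖ ≤ etafun T D G lam i * G := by
    rw [norm_smul, norm_of_nonneg heta]
    exact mul_le_mul_of_nonneg_left (hg t ht htT _ hw) heta
  calc lam * ‖w i t - w i (t + 1)‖
      ≤ lam * (2 * ‖etafun T D G lam i • g t (w i t)‖) := by
        gcongr
        exact norm_sub_le_two_mul_norm_of_nearest hw (h.expert_succ i hi hiK t ht htT).2
    _ ≤ lam * (2 * (etafun T D G lam i * G)) := by gcongr
    _ = 2 * (lam * (etafun T D G lam i * G)) := by ring
    _ ≤ 2 * (1 / 8 * D) :=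
        mul_le_mul_of_nonneg_left
          (mul_etafun_mul_le hD hG.ne' hlam (hpar.mul_lam_le_window hiK)) zero_le_two
    _ = 1 / 4 * D := by ring

lemma abs_bit_succ_le (h : IsSmoothedOGD W G D lam Z T K f g U w v b x) (hlam : 0 ≤ lam)
    (hG : 0 ≤ G) (hfv : f t (v i t) ∈ Icc 0 (G * D)) (hfw : f t (w (i + 1) t) ∈ Icc 0 (G * D))
    (hv : lam * ‖v i t - v i (t + 1)‖ ≤ 2 * D)
    (hw : lam * ‖w (i + 1) t - w (i + 1) (t + 1)‖ ≤ 2 * D) :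
    |b (i + 1) t| ≤ 1 / √(max lam 1) := by
  have hcost (m : ℝ) (hm : 0 ≤ m) (hm_le : lam * m ≤ 2 * D) :
      lam * G * m ∈ Icc 0 (2 * (G * D)) :=
    ⟨by positivity, by nlinarith⟩
  have hgap := abs_lossGap_div_le_one hfv hfw (hcost _ (norm_nonneg _) hv)
    (hcost _ (norm_nonneg _) hw)
  rw [h.bit, sqrt_monotone.map_max, sqrt_one, Nat.add_sub_cancel, abs_div,
    abs_of_pos (by positivity : 0 < max √lam 1)]
  gcongr
  rwa [show (1 + 2) * G * D = 3 * (G * D) by ring]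

lemma combiner_succ_movement_le (h : IsSmoothedOGD W G D lam Z T K f g U w v b x)
    (hpar : IsAdmissible lam Z T K) (hW : Convex ℝ W) (hdiam : ∀ p ∈ W, ∀ q ∈ W, ‖p - q‖ ≤ D)
    (hi : 1 ≤ i) (hiK : i + 1 ≤ K) (ht : 1 ≤ t) (htT : t ≤ T)
    (hbit : |b (i + 1) t| ≤ 1 / √(max lam 1)) {r : ℝ}
    (hv : lam * ‖v i t - v i (t + 1)‖ ≤ r)
    (hw : lam * ‖w (i + 1) t - w (i + 1) (t + 1)‖ ≤ r) :
    lam * ‖v (i + 1) t - v (i + 1) (t + 1)‖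
      ≤ r + (1 / 4 * windowRatio lam Z (nfun T (i + 1)) + 1 / 2 * (√lam * Z)) * D := by
  have hlam := hpar.lam_nonneg
  have hdist : ‖v i (t + 1) - w (i + 1) (t + 1)‖ ≤ D :=
    hdiam _ (h.combiner_mem hW hi (by lia) (by lia) (by lia)) _
      (h.expert_mem (by lia) hiK (by lia) (by lia))
  obtain ⟨hU, hgU⟩ := h.threshold (i + 1) (by lia) hiK
  have hdrift := mul_abs_gconf_dnpUpdate_sub_le hlam hpar.scale_pos hpar.one_le_log
    (hpar.le_window hiK) hU.le hgU (x (i + 1) t) hbit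
  rw [← h.deviation_succ (i + 1) (by lia) hiK t ht htT] at hdrift
  rw [h.combiner_succ hi hiK ht (by lia), h.combiner_succ hi hiK (by lia) (by lia)]
  set c := gconf (nfun T (i + 1)) Z (x (i + 1) t)
  set c' := gconf (nfun T (i + 1)) Z (x (i + 1) (t + 1))
  calc lam * ‖((1 - c) • v i t + c • w (i + 1) t)
        - ((1 - c') • v i (t + 1) + c' • w (i + 1) (t + 1))‖
      ≤ lam * (max ‖v i t - v i (t + 1)‖ ‖w (i + 1) t - w (i + 1) (t + 1)‖
          + |c' - c| * ‖v i (t + 1) - w (i + 1) (t + 1)‖) := by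
        gcongr
        exact norm_convexComb_sub_le (gconf_mem_Icc _ _ _) _ _ _ _ _
    _ = max (lam * ‖v i t - v i (t + 1)‖) (lam * ‖w (i + 1) t - w (i + 1) (t + 1)‖)
          + lam * |c' - c| * ‖v i (t + 1) - w (i + 1) (t + 1)‖ := by
        rw [mul_add, mul_max_of_nonneg _ _ hlam, mul_assoc]
    _ ≤ r + (1 / 4 * windowRatio lam Z (nfun T (i + 1)) + 1 / 2 * (√lam * Z)) * D :=
        add_le_add (max_le hv hw)
          (mul_le_mul hdrift hdist (norm_nonneg _) (le_trans (by positivity) hdrift))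

lemma combiner_movement_le (h : IsSmoothedOGD W G D lam Z T K f g U w v b x)
    (hpar : IsAdmissible lam Z T K) (hW : Convex ℝ W) (hG : 0 < G) (hD : 0 ≤ D)
    (hdiam : ∀ p ∈ W, ∀ q ∈ W, ‖p - q‖ ≤ D)
    (hg : ∀ t, 1 ≤ t → t ≤ T → ∀ p ∈ W, ‖g t p‖ ≤ G)
    (hf : ∀ t, 1 ≤ t → t ≤ T → ∀ p ∈ W, f t p ∈ Icc 0 (G * D))
    (hi : 1 ≤ i) (hiK : i ≤ K) (ht : 1 ≤ t) (htT : t ≤ T) :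
    lam * ‖v i t - v i (t + 1)‖ ≤ combinerBound lam Z T i * D := by
  have hexpert : ∀ i j, 1 ≤ i → i ≤ K →
      lam * ‖w i t - w i (t + 1)‖ ≤ combinerBound lam Z T j * D := fun i j hi hiK =>
    (h.expert_movement_le hpar hG hD hg hi hiK ht htT).trans
      (mul_le_mul_of_nonneg_right (hpar.one_fourth_le_combinerBound j) hD)
  induction i, hi using Nat.le_induction with
  | base => simpa only [h.combiner_one] using hexpert 1 1 le_rfl hiK
  | succ i hi ih =>
    have hiK' : i ≤ K := by lia
    have hv := ih hiK'
    have hw := hexpert (i + 1) i (by lia) hiK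
    have hbound : combinerBound lam Z T i * D ≤ 2 * D :=
      mul_le_mul_of_nonneg_right (hpar.combinerBound_le_two hiK') hD
    have hbit := h.abs_bit_succ_le hpar.lam_nonneg hG.le
      (hf t ht htT _ (h.combiner_mem hW hi hiK' ht (by lia)))
      (hf t ht htT _ (h.expert_mem (by lia) hiK ht (by lia))) (hv.trans hbound) (hw.trans hbound)
    refine (h.combiner_succ_movement_le hpar hW hdiam hi hiK ht htT hbit hv hw).trans ?_
    rw [← add_mul]
    exact mul_le_mul_of_nonneg_right (combinerBound_add_drift_le lam Z T i) hD

end IsSmoothedOGD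

theorem smoothed_ogd_slow_movement_general {W : Set E} (hW : Convex ℝ W) {G D : ℝ} (hG : 0 < G)
    (hD : 0 < D) (hdiam : ∀ p ∈ W, ∀ q ∈ W, ‖p - q‖ ≤ D) {T K : ℕ} {f : ℕ → E → ℝ}
    {g : ℕ → E → E} (hg : ∀ t, 1 ≤ t → t ≤ T → ∀ p ∈ W, ‖g t p‖ ≤ G)
    (hf : ∀ t, 1 ≤ t → t ≤ T → ∀ p ∈ W, f t p ∈ Icc 0 (G * D))
    (hpar : IsAdmissible lam Z T K) {U : ℕ → ℝ} {w v : ℕ → ℕ → E} {b x : ℕ → ℕ → ℝ}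
    (hrun : IsSmoothedOGD W G D lam Z T K f g U w v b x) :
    ∀ i, 1 ≤ i → i ≤ K → ∀ t, 1 ≤ t → t ≤ T →
      lam * ‖w i t - w i (t + 1)‖ ≤ 2 * D ∧ lam * ‖v i t - v i (t + 1)‖ ≤ 2 * D := by
  intro i hi hiK t ht htT
  have hw := hrun.expert_movement_le hpar hG hD.le hg hi hiK ht htT
  have hv := hrun.combiner_movement_le hpar hW hG hD.le hdiam hg hf hi hiK ht htT
  exact ⟨by linarith,
    hv.trans (mul_le_mul_of_nonneg_right (hpar.combinerBound_le_two hiK) hD.le)⟩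

end NormedSpace

end

/-- **Lemma 2: all experts and combiners in smoothed OGD move slowly (M = 2).** -/
theorem smoothed_ogd_slow_movement
    (d : ℕ) (W : Set (EuclideanSpace ℝ (Fin d)))
    (hWne : W.Nonempty) (hWconv : Convex ℝ W) (hWclosed : IsClosed W)
    (G D : ℝ) (hG : 0 < G) (hD : 0 < D)
    (hdiam : ∀ p ∈ W, ∀ q ∈ W, ‖p - q‖ ≤ D)
    (T : ℕ) (f : ℕ → EuclideanSpace ℝ (Fin d) → ℝ)
    (hconv : ∀ t, 1 ≤ t → t ≤ T → ConvexOn ℝ Set.univ (f t))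
    (hdiff : ∀ t, 1 ≤ t → t ≤ T → Differentiable ℝ (f t))
    (hgrad : ∀ t, 1 ≤ t → t ≤ T → ∀ p ∈ W, ‖gradient (f t) p‖ ≤ G)
    (hrange : ∀ t, 1 ≤ t → t ≤ T → ∀ p ∈ W, f t p ∈ Set.Icc 0 (G * D))
    (lam : ℝ) (hlam : 0 ≤ lam)
    (Z : ℝ) (hZdef : Z = 1 / (T : ℝ))
    (hT : (T : ℝ) ≥ max (Real.sqrt lam * Real.logb 2 (T : ℝ)) (Real.exp 1))
    (K : ℕ)
    (hK : (K : ℤ) = ⌊Real.logb 2 ((T : ℝ) / (32 * max lam 1 * Real.log (1 / Z)))⌋ + 1)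
    (Ufn : ℕ → ℝ)
    (hU : ∀ i, 1 ≤ i → i ≤ K → 0 < Ufn i ∧ gtilde (nfun T i) Z (Ufn i) = 1)
    (hUuniq : ∀ i, 1 ≤ i → i ≤ K → ∀ y, 0 < y → gtilde (nfun T i) Z y = 1 → y = Ufn i)
    (w v : ℕ → ℕ → EuclideanSpace ℝ (Fin d))
    (hwW1 : ∀ i, 1 ≤ i → i ≤ K → w i 1 ∈ W)
    (hwrec : ∀ i, 1 ≤ i → i ≤ K → ∀ t, 1 ≤ t → t ≤ T →
      w i (t + 1) ∈ W ∧ ∀ y ∈ W,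
        ‖w i t - etafun T D G lam i • gradient (f t) (w i t) - w i (t + 1)‖
          ≤ ‖w i t - etafun T D G lam i • gradient (f t) (w i t) - y‖)
    (bb : ℕ → ℕ → ℝ)
    (hbb : ∀ i t, bb i t =
      (((f t (v (i - 1) t) + lam * G * ‖v (i - 1) t - v (i - 1) (t + 1)‖)
          - (f t (w i t) + lam * G * ‖w i t - w i (t + 1)‖)) / ((1 + 2) * G * D))
        / max (Real.sqrt lam) 1)
    (xdev : ℕ → ℕ → ℝ)
    (hxdev1 : ∀ i, 2 ≤ i → i ≤ K → xdev i 1 = 0)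
    (hxdevrec : ∀ i, 2 ≤ i → i ≤ K → ∀ t, 1 ≤ t → t ≤ T →
      xdev i (t + 1) =
        if (0 ≤ xdev i t ∧ xdev i t ≤ Ufn i) ∨ (xdev i t < 0 ∧ 0 < bb i t)
            ∨ (Ufn i < xdev i t ∧ bb i t < 0)
        then (1 - 1 / nfun T i) * xdev i t + bb i t
        else (1 - 1 / nfun T i) * xdev i t)
    (hv1 : ∀ t, v 1 t = w 1 t)
    (hv : ∀ i, 2 ≤ i → i ≤ K → ∀ t, 1 ≤ t → t ≤ T + 1 →
      v i t = (1 - gconf (nfun T i) Z (xdev i t)) • v (i - 1) t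
                + gconf (nfun T i) Z (xdev i t) • w i t)
    :
    ∀ i, 1 ≤ i → i ≤ K → ∀ t, 1 ≤ t → t ≤ T →
      lam * ‖w i t - w i (t + 1)‖ ≤ 2 * D ∧ lam * ‖v i t - v i (t + 1)‖ ≤ 2 * D := by
  exact smoothed_ogd_slow_movement_general hWconv hG hD hdiam hgrad hrange
    (isAdmissible_of_eq_floor_logb hlam hZdef hT hK)
    ⟨hU, hwW1, hwrec, hbb, hxdev1, hxdevrec, hv1, hv⟩
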